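/- Let (X,d) be a complete and locally compact length space such that for all x, y ∈ X and all t, s ≥ 0 the Hausdorff distance between closed balls satisfies d_H(B̄_t(x), B̄_s(y)) = d(x,y) + |t−s|. Then (X,d) is strongly geodesically complete: for every x ∈ X, every r > 0 and every y ≠ x there exist a point p with d(x,p) = r and a geodesic segment γ:[0,d(x,y)+r] → X with γ(0)=y, γ(d(x,y))=x and γ(d(x,y)+r)=p. -/

import Mathlib

open Metric Set

/-- A (pseudo-e)metric space is a *length space* if the distance between any two points
equals the infimum of the lengths of continuous curves joining them. -/
def IsLengthSpace (X : Type*) [PseudoEMetricSpace X] : Prop :=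
  ∀ x y : X, edist x y =
    ⨅ (γ : ℝ → X) (_ : ContinuousOn γ (Set.Icc (0:ℝ) 1)) (_ : γ 0 = x) (_ : γ 1 = y),
      eVariationOn γ (Set.Icc (0:ℝ) 1)

/-- A *geodesic segment* defined on `[0,a]`: a curve realizing distance,
parameterized by arc length. -/
def IsGeodesicSegment {X : Type*} [PseudoMetricSpace X] (γ : ℝ → X) (a : ℝ) : Prop :=
  ∀ u ∈ Set.Icc (0:ℝ) a, ∀ v ∈ Set.Icc (0:ℝ) a, dist (γ u) (γ v) = |u - v|

/-- *Strong geodesic extendibility* at `x`: for every `r > 0` and every `y ≠ x` there is a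
point `p` with `d(x,p) = r` and a geodesic segment from `y` through `x` to `p`. -/
def StrongGeodesicExtendibilityAt {X : Type*} [PseudoMetricSpace X] (x : X) : Prop :=
  ∀ r > (0:ℝ), ∀ y : X, y ≠ x → ∃ (p : X) (γ : ℝ → X),
    dist x p = r ∧ IsGeodesicSegment γ (dist x y + r) ∧
    γ 0 = y ∧ γ (dist x y) = x ∧ γ (dist x y + r) = p

lemma aux_approx {X : Type*} [MetricSpace X] (hX : IsLengthSpace X) (x y : X) (ε : ℝ)
    (hε : 0 < ε) : ∃ γ : ℝ → X, ∀ t ∈ Icc (0:ℝ) (dist x y), dist x (γ t) = t ∧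
      dist (γ t) y ≤ dist x y - t + ε ∧
      ∀ s ∈ Icc (0:ℝ) (dist x y), dist (γ s) (γ t) ≤ |s - t| + ε := by
  have h1 : edist x y < edist x y + ENNReal.ofReal ε :=
    ENNReal.lt_add_right (edist_ne_top x y) (by simpa using hε)
  conv_lhs at h1 => rw [hX x y]
  simp only [iInf_lt_iff] at h1
  obtain ⟨c, hc, c0, c1, hlen⟩ := h1
  -- chain inequality
  have key : ∀ a b : ℝ, 0 ≤ a → a ≤ b → b ≤ 1 →
      dist x (c a) + dist (c a) (c b) + dist (c b) y ≤ dist x y + ε := by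
    intro a b ha hab hb
    have e1 := eVariationOn.Icc_add_Icc c (s := univ) ha hab (mem_univ _)
    have e2 := eVariationOn.Icc_add_Icc c (s := univ) (ha.trans hab) hb (mem_univ _)
    simp only [univ_inter] at e1 e2
    have i1 := eVariationOn.edist_le c (s := Icc 0 a) (left_mem_Icc.2 ha) (right_mem_Icc.2 ha)
    have i2 := eVariationOn.edist_le c (s := Icc a b) (left_mem_Icc.2 hab) (right_mem_Icc.2 hab)
    have i3 := eVariationOn.edist_le c (s := Icc b 1) (left_mem_Icc.2 hb) (right_mem_Icc.2 hb)
    rw [c0] at i1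
    rw [c1] at i3
    have h : edist x (c a) + edist (c a) (c b) + edist (c b) y
        ≤ edist x y + ENNReal.ofReal ε := by
      refine le_trans ?_ hlen.le
      rw [← e2, ← e1]
      gcongr
    simp only [edist_dist] at h
    rw [← ENNReal.ofReal_add dist_nonneg dist_nonneg,
      ← ENNReal.ofReal_add (by positivity) dist_nonneg,
      ← ENNReal.ofReal_add dist_nonneg hε.le] at h
    exact (ENNReal.ofReal_le_ofReal_iff (by positivity)).1 h
  have ivt : ∀ t : ℝ, ∃ u : ℝ, t ∈ Icc (0:ℝ) (dist x y) → u ∈ Icc (0:ℝ) 1 ∧ dist x (c u) = t := by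
    intro t
    by_cases ht : t ∈ Icc (0:ℝ) (dist x y)
    · have hcont : ContinuousOn (fun u => dist x (c u)) (Icc (0:ℝ) 1) :=
        (continuous_const.dist continuous_id).comp_continuousOn hc
      have := intermediate_value_Icc (zero_le_one (α := ℝ)) hcont
      simp only [c0, c1, dist_self] at this
      obtain ⟨u, hu, hut⟩ := this ht
      exact ⟨u, fun _ => ⟨hu, hut⟩⟩
    · exact ⟨0, fun h => absurd h ht⟩
  choose u hu using ivt
  refine ⟨fun t => c (u t), fun t ht => ?_⟩
  obtain ⟨⟨hu0, hu1⟩, hut⟩ := hu t ht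
  refine ⟨hut, ?_, fun s hs => ?_⟩
  · have := key (u t) (u t) hu0 le_rfl hu1
    rw [dist_self, hut] at this
    show dist (c (u t)) y ≤ _
    linarith
  · obtain ⟨⟨hs0, hs1⟩, hus⟩ := hu s hs
    show dist (c (u s)) (c (u t)) ≤ _
    have t1 := dist_triangle x (c (u s)) y
    have t2 := dist_triangle x (c (u t)) y
    rcases le_total (u s) (u t) with h | h
    · have := key _ _ hs0 h hu1
      have := neg_abs_le (s - t)
      linarith
    · have := key _ _ hu0 h hs1
      rw [dist_comm (c (u t)) (c (u s))] at this
      have := le_abs_self (s - t)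
      linarith

lemma aux_ball {X : Type*} [MetricSpace X] (hX : IsLengthSpace X) (x : X) (r δ : ℝ)
    (hr : 0 ≤ r) (hδ : 0 < δ) (y : X) (hy : dist x y ≤ r + δ) :
    ∃ z ∈ closedBall x r, dist z y ≤ 2 * δ := by
  rcases le_total (dist x y) r with h | h
  · exact ⟨y, by rwa [mem_closedBall'], by rw [dist_self]; positivity⟩
  · obtain ⟨γ, hγ⟩ := aux_approx hX x y δ hδ
    obtain ⟨h1, h2, -⟩ := hγ r ⟨hr, h⟩
    exact ⟨γ r, by rw [mem_closedBall', h1], by linarith⟩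

lemma aux_proper {X : Type*} [MetricSpace X] [CompleteSpace X] [LocallyCompactSpace X]
    (hX : IsLengthSpace X) (x : X) (r : ℝ) : IsCompact (closedBall x r) := by
  by_contra hcon
  have hneg : ∀ r : ℝ, r ≤ 0 → IsCompact (closedBall x r) := fun r h0 =>
    (isCompact_singleton (x := x)).of_isClosed_subset isClosed_closedBall
      ((closedBall_subset_closedBall h0).trans (by simp))
  set S : Set ℝ := {r | ¬ IsCompact (closedBall x r)} with hS
  have hbdd : BddBelow S := ⟨0, fun r hr => by
    by_contra h; exact hr (hneg r (not_le.1 h).le)⟩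
  set R := sInf S with hR
  have hlt : ∀ s < R, IsCompact (closedBall x s) := fun s hs => by
    by_contra h; exact absurd (csInf_le hbdd h) (not_le.2 hs)
  have hR0 : 0 ≤ R := le_csInf ⟨r, hcon⟩ (fun r hr => by
    by_contra h; exact hr (hneg r (not_le.1 h).le))
  have hRc : IsCompact (closedBall x R) := by
    rcases hR0.eq_or_lt with h0 | h0
    · exact hneg R h0.symm.le
    refine isCompact_iff_totallyBounded_isComplete.2 ⟨?_, isClosed_closedBall.isComplete⟩
    rw [Metric.totallyBounded_iff]
    intro ε hε
    set δ := min (ε / 8) (R / 2) with hδ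
    have hδ0 : 0 < δ := by positivity
    have hδ1 : δ ≤ ε / 8 := min_le_left _ _
    have hδ2 : δ ≤ R / 2 := min_le_right _ _
    obtain ⟨t, htf, ht⟩ := Metric.totallyBounded_iff.1
      (hlt (R - δ) (by linarith)).totallyBounded (ε / 2) (by positivity)
    refine ⟨t, htf, fun y hy => ?_⟩
    obtain ⟨z, hz, hzy⟩ := aux_ball hX x (R - δ) δ (by linarith) hδ0 y
      (by rw [mem_closedBall'] at hy; linarith)
    have := ht hz
    simp only [mem_iUnion, mem_ball] at this ⊢
    obtain ⟨w, hw, hzw⟩ := this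
    refine ⟨w, hw, ?_⟩
    have := dist_triangle y z w
    rw [dist_comm y z] at this
    linarith
  obtain ⟨K, hK, hsub⟩ := exists_compact_superset hRc
  obtain ⟨δ, hδ, hδK⟩ := hRc.exists_cthickening_subset_open isOpen_interior hsub
  have hbig : IsCompact (closedBall x (R + δ / 2)) := by
    refine hK.of_isClosed_subset isClosed_closedBall fun y hy => interior_subset (hδK ?_)
    obtain ⟨z, hz, hzy⟩ := aux_ball hX x R (δ / 2) hR0 (by positivity) y
      (by rwa [mem_closedBall'] at hy)
    exact mem_cthickening_of_dist_le y z δ _ hz (by rw [dist_comm]; linarith)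
  obtain ⟨s, hs, hsl⟩ := exists_lt_of_csInf_lt ⟨r, hcon⟩ (show sInf S < R + δ / 2 by linarith)
  exact hs (hbig.of_isClosed_subset isClosed_closedBall (closedBall_subset_closedBall hsl.le))

lemma aux_geod {X : Type*} [MetricSpace X] [CompleteSpace X] [LocallyCompactSpace X]
    (hX : IsLengthSpace X) (x y : X) :
    ∃ γ : ℝ → X, γ 0 = x ∧ γ (dist x y) = y ∧ IsGeodesicSegment γ (dist x y) := by
  have H := fun n : ℕ => aux_approx hX x y (1 / ((n:ℝ) + 1)) (by positivity)
  choose g hg using H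
  let U : Ultrafilter ℕ := Filter.hyperfilter ℕ
  have hU : (U : Filter ℕ) ≤ Filter.atTop := Nat.hyperfilter_le_atTop
  have hlim : ∀ t : ℝ, ∃ z : X, t ∈ Icc (0:ℝ) (dist x y) →
      Filter.Tendsto (fun n => g n t) U (nhds z) := by
    intro t
    by_cases ht : t ∈ Icc (0:ℝ) (dist x y)
    · obtain ⟨z, -, hz⟩ := (aux_proper hX x t).ultrafilter_le_nhds (U.map fun n => g n t)
        (by
          rw [Filter.le_principal_iff]
          refine Filter.Eventually.of_forall (f := (U : Filter ℕ)) fun n => ?_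
          show g n t ∈ closedBall x t
          rw [mem_closedBall', (hg n t ht).1])
      exact ⟨z, fun _ => hz⟩
    · exact ⟨x, fun h => absurd h ht⟩
  choose γ hγ using hlim
  have hε : Filter.Tendsto (fun n : ℕ => 1 / ((n:ℝ) + 1)) U (nhds 0) :=
    tendsto_one_div_add_atTop_nhds_zero_nat.mono_left hU
  have hx : ∀ t ∈ Icc (0:ℝ) (dist x y), dist x (γ t) = t := fun t ht => by
    have h1 : Filter.Tendsto (fun n => dist x (g n t)) U (nhds (dist x (γ t))) :=
      tendsto_const_nhds.dist (hγ t ht)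
    have h2 : (fun n => dist x (g n t)) = fun _ => t := funext fun n => (hg n t ht).1
    rw [h2] at h1
    exact tendsto_nhds_unique h1 tendsto_const_nhds
  have hD : dist x y ∈ Icc (0:ℝ) (dist x y) := ⟨dist_nonneg, le_rfl⟩
  have h0 : (0:ℝ) ∈ Icc (0:ℝ) (dist x y) := ⟨le_rfl, dist_nonneg⟩
  refine ⟨γ, (dist_eq_zero.1 (hx 0 h0)).symm, ?_, ?_⟩
  · refine dist_le_zero.1 (le_of_tendsto_of_tendsto'
      ((hγ _ hD).dist (tendsto_const_nhds (x := y))) hε fun n => ?_)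
    have := (hg n _ hD).2.1
    linarith
  · intro s hs t ht
    apply le_antisymm
    · have h2 := hε.const_add (|s - t|)
      rw [add_zero] at h2
      exact le_of_tendsto_of_tendsto' ((hγ s hs).dist (hγ t ht)) h2
        fun n => (hg n t ht).2.2 s hs
    · have e1 := hx s hs
      have e2 := hx t ht
      have t1 := dist_triangle x (γ s) (γ t)
      have t2 := dist_triangle x (γ t) (γ s)
      rw [dist_comm (γ t) (γ s)] at t2
      rw [abs_le]
      constructor <;> linarith

/-- If in a complete, locally compact length space the Hausdorff distance
between closed balls is given by `d_H(B̄_t(x), B̄_s(y)) = d(x,y) + |t - s|`, then the space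
is strongly geodesically complete. -/
theorem stronglyGeodesicallyComplete_of_hausdorffDist {X : Type*} [MetricSpace X]
    [CompleteSpace X] [LocallyCompactSpace X] (hX : IsLengthSpace X)
    (hform : ∀ (x y : X) (t s : ℝ), 0 ≤ t → 0 ≤ s →
      Metric.hausdorffDist (closedBall x t) (closedBall y s) = dist x y + |t - s|) :
    ∀ x : X, StrongGeodesicExtendibilityAt x := by
  intro x r hr y hyx
  have hxr : x ∈ closedBall x r := mem_closedBall_self hr.le
  obtain ⟨p, hp, hmax⟩ := (aux_proper hX x r).exists_isMaxOn ⟨x, hxr⟩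
    (f := fun p => dist p y) (by fun_prop)
  have hmax' : ∀ q ∈ closedBall x r, dist q y ≤ dist p y := fun q hq => hmax hq
  have hle : dist x y + r ≤ dist p y := by
    have h := hform x y r 0 hr.le le_rfl
    rw [sub_zero, abs_of_pos hr] at h
    rw [← h]
    refine hausdorffDist_le_of_mem_dist dist_nonneg
      (fun q hq => ⟨y, by simp, hmax' q hq⟩) (fun q hq => ⟨x, hxr, ?_⟩)
    have : q = y := by simpa using hq
    rw [this, dist_comm]
    exact hmax' x hxr
  rw [mem_closedBall'] at hp
  have htri := dist_triangle p x y
  rw [dist_comm p x] at htri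
  have hxp : dist x p = r := by linarith
  have hpy : dist p y = dist x y + r := by linarith
  obtain ⟨a, a0, a1, ha⟩ := aux_geod hX y x
  obtain ⟨b, b0, b1, hb⟩ := aux_geod hX x p
  rw [dist_comm y x] at a1 ha
  rw [hxp] at b1 hb
  have hD : 0 < dist x y := dist_pos.2 hyx.symm
  set D := dist x y with hDdef
  refine ⟨p, fun u => if u ≤ D then a u else b (u - D), hxp, ?_, ?_, ?_, ?_⟩
  · have cross : ∀ u v : ℝ, 0 ≤ u → u ≤ D → D < v → v ≤ D + r →
        dist (a u) (b (v - D)) = v - u := by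
      intro u v hu0 hu hv hv1
      have e1 := ha 0 ⟨le_rfl, hD.le⟩ u ⟨hu0, hu⟩
      have e2 := ha u ⟨hu0, hu⟩ D ⟨hD.le, le_rfl⟩
      have e3 := hb 0 ⟨le_rfl, hr.le⟩ (v - D) ⟨by linarith, by linarith⟩
      have e4 := hb (v - D) ⟨by linarith, by linarith⟩ r ⟨hr.le, le_rfl⟩
      rw [abs_of_nonpos (by linarith)] at e1 e2 e3 e4
      rw [a0] at e1
      rw [a1] at e2
      rw [b0] at e3
      rw [b1] at e4
      have t1 := dist_triangle (a u) x (b (v - D))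
      have t2 := dist_triangle4 y (a u) (b (v - D)) p
      rw [dist_comm y p] at t2
      linarith
    rintro u ⟨hu0, hu1⟩ v ⟨hv0, hv1⟩
    dsimp only
    split_ifs with h1 h2 h2
    · exact ha u ⟨hu0, h1⟩ v ⟨hv0, h2⟩
    · rw [cross u v hu0 h1 (not_le.1 h2) hv1, abs_of_nonpos (by linarith)]
      ring
    · rw [dist_comm, cross v u hv0 h2 (not_le.1 h1) hu1, abs_of_nonneg (by linarith)]
    · rw [hb (u - D) ⟨by linarith, by linarith⟩ (v - D) ⟨by linarith, by linarith⟩]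
      congr 1
      ring
  · simp [hD.le, a0]
  · simp [a1]
  · simp [hr, b1]
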